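/- Let M be a matroid with finite ground set E and rank function r_M, let M* be its dual with rank function r_{M*}, let q be a nonzero real number, and let γ : E → ℝ with γ_e ≠ 0 for all e ∈ E. Then Σ_{A⊆E} q^{−r_M(A)} Π_{e∈A} γ_e = q^{−r_M(E)} · (Π_{e∈E} γ_e) · Σ_{A⊆E} q^{−r_{M*}(A)} Π_{e∈A} (q/γ_e). -/

import Mathlib

/-!
The substitution `A ↦ Aᶜ` matches the two sums term by term. The powers of `q` agree because
`r Aᶜ = r E + r* A - |A|`, and the surplus factor `q ^ |A|` is the one produced by
`∏ e ∈ A, q / γ e`, whose denominators turn `∏ e, γ e` into `∏ e ∈ Aᶜ, γ e`.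
-/

section

open Finset

variable {E K : Type*} [Fintype E] [DecidableEq E]

/-- The dual rank function `r*(A) = |A| + r(E ∖ A) - r(E)`. It takes values in `ℤ` and is defined
for every set function `r`, so that no truncated subtraction occurs. -/
def dualRank (r : Finset E → ℤ) (A : Finset E) : ℤ :=
  #A + r Aᶜ - r univ

/-- The multivariate Tutte polynomial `Z̃(M; q, γ)` of the matroid `M` with rank function `r`,
as a function of `q` and the weights `γ`, for an arbitrary set function `r`. -/
def multivariateTutte [Semifield K] (r : Finset E → ℤ) (q : K) (γ : E → K) : K :=
  ∑ A : Finset E, q ^ (-r A) * ∏ e ∈ A, γ e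

theorem zpow_neg_apply_compl [GroupWithZero K] (r : Finset E → ℤ) {q : K} (hq : q ≠ 0)
    (A : Finset E) :
    q ^ (-r Aᶜ) = q ^ (-r univ) * q ^ (-dualRank r A) * q ^ #A := by
  have hexp : -r Aᶜ = -r univ + -dualRank r A + #A := by
    rw [dualRank]
    ring
  rw [hexp, zpow_add₀ hq, zpow_add₀ hq, zpow_natCast]

theorem prod_univ_mul_prod_div [CommGroupWithZero K] (q : K) {γ : E → K} {A : Finset E}
    (hγ : ∀ e ∈ A, γ e ≠ 0) :
    (∏ e, γ e) * ∏ e ∈ A, q / γ e = q ^ #A * ∏ e ∈ Aᶜ, γ e := by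
  have hcancel : (∏ e ∈ A, γ e) * ∏ e ∈ A, q / γ e = q ^ #A := by
    rw [← prod_mul_distrib, prod_congr rfl fun e he => mul_div_cancel₀ q (hγ e he), prod_const]
  rw [← prod_mul_prod_compl A γ, mul_right_comm, hcancel]

theorem stmt14_general [Semifield K] (r : Finset E → ℤ) {q : K} (hq : q ≠ 0) {γ : E → K}
    (hγ : ∀ e, γ e ≠ 0) :
    multivariateTutte r q γ =
      q ^ (-r univ) * (∏ e, γ e) * multivariateTutte (dualRank r) q fun e => q / γ e := by
  calc
    multivariateTutte r q γ = ∑ A : Finset E, q ^ (-r Aᶜ) * ∏ e ∈ Aᶜ, γ e :=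
      (Equiv.sum_comp (compl_involutive (α := Finset E)).toPerm _).symm
    _ = ∑ A : Finset E, q ^ (-r univ) * (∏ e, γ e) *
          (q ^ (-dualRank r A) * ∏ e ∈ A, q / γ e) := by
      refine sum_congr rfl fun A _ => ?_
      rw [zpow_neg_apply_compl r hq, mul_assoc _ (q ^ #A),
        ← prod_univ_mul_prod_div q fun e _ => hγ e, mul_mul_mul_comm]
    _ = q ^ (-r univ) * (∏ e, γ e) * multivariateTutte (dualRank r) q fun e => q / γ e :=
      (mul_sum ..).symm

end

/-- Duality identity for the multivariate Tutte polynomial of a matroid: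
for a matroid with rank function `r` on finite ground set `E`, dual rank function
`r*` (given by `r*(A) = |A| + r(E∖A) − r(E)`), nonzero `q`, and nowhere-zero `γ`,
`Z̃(M;q,γ) = q^{−r(E)} (Π_e γ_e) Z̃(M*;q,{q/γ_e})`. -/
theorem stmt14 {E : Type} [Fintype E] [DecidableEq E]
    (r : Finset E → ℕ)
    (hr_le : ∀ A : Finset E, r A ≤ A.card)
    (hr_mono : ∀ A B : Finset E, A ⊆ B → r A ≤ r B)
    (hr_submod : ∀ A B : Finset E, r (A ∪ B) + r (A ∩ B) ≤ r A + r B)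
    (rstar : Finset E → ℕ)
    (hdual : ∀ A : Finset E, (rstar A : ℤ) = A.card + r Aᶜ - r Finset.univ)
    (q : ℝ) (hq : q ≠ 0) (γ : E → ℝ) (hγ : ∀ e, γ e ≠ 0) :
    ∑ A : Finset E, q ^ (-(r A : ℤ)) * ∏ e ∈ A, γ e
      = q ^ (-(r Finset.univ : ℤ)) * (∏ e : E, γ e) *
          ∑ A : Finset E, q ^ (-(rstar A : ℤ)) * ∏ e ∈ A, (q / γ e) := by
  have hrstar : dualRank (fun A => (r A : ℤ)) = fun A => (rstar A : ℤ) := (funext hdual).symm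
  simpa only [multivariateTutte, hrstar] using stmt14_general (fun A => (r A : ℤ)) hq hγ
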